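/- Let p be an odd prime and n a positive integer. Let γ, g ∈ GL_n(ℚ_p) and suppose γ is topologically unipotent, i.e., γ^(p^k) → 1 as k → ∞. Set δ = g⁻¹γg and suppose that every entry of δ and every entry of δ⁻¹ has p-adic norm at most 1 (so that δ ∈ GL_n(ℤ_p)). Then the reduction of δ modulo p, i.e., the matrix over 𝔽_p = ℤ/pℤ obtained by applying the residue map ℤ_p → ℤ/pℤ to each entry of δ, is unipotent: (δ̄ − 1) is nilpotent. -/

import Mathlib

open Filter

/-!
Topological unipotence, `x ^ (p ^ k) → 1`, is invariant under conjugation, descends along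
topologically inducing homomorphisms (such as `M_n(ℤ_p) → M_n(ℚ_p)`) and is preserved by
continuous ones (such as reduction modulo `p`). In a discrete ring of characteristic `p` it means
`x ^ (p ^ k) = 1` for large `k`, that is, `(x - 1) ^ (p ^ k) = 0`.
-/

open Topology

/-- An element `x` of a topological monoid is topologically unipotent (at `p`) if
`x ^ (p ^ k) → 1` as `k → ∞`. -/
def IsTopologicallyUnipotent (p : ℕ) {M : Type*} [Monoid M] [TopologicalSpace M] (x : M) : Prop :=
  Tendsto (fun k : ℕ => x ^ p ^ k) atTop (𝓝 1)

namespace IsTopologicallyUnipotent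

section Monoid

variable {p : ℕ} {M N F : Type*} [Monoid M] [TopologicalSpace M] [Monoid N] [TopologicalSpace N]
  [FunLike F M N] [MonoidHomClass F M N] {x : M}

theorem units_conj [ContinuousMul M] (hx : IsTopologicallyUnipotent p x) (u : Mˣ) :
    IsTopologicallyUnipotent p (↑u⁻¹ * x * u) := by
  simpa only [IsTopologicallyUnipotent, Units.conj_pow', mul_one, Units.inv_mul]
    using (Tendsto.const_mul (↑u⁻¹ : M) hx).mul_const (u : M)

theorem map {f : F} (hf : Continuous f) (hx : IsTopologicallyUnipotent p x) :
    IsTopologicallyUnipotent p (f x) := by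
  simpa only [IsTopologicallyUnipotent, Function.comp_def, map_pow, map_one]
    using (hf.tendsto 1).comp hx

theorem of_map {f : F} (hf : IsInducing f) (hx : IsTopologicallyUnipotent p (f x)) :
    IsTopologicallyUnipotent p x := by
  simpa only [IsTopologicallyUnipotent, hf.tendsto_nhds_iff, Function.comp_def, map_pow, map_one]
    using hx

theorem exists_pow_eq_one [DiscreteTopology M] (hx : IsTopologicallyUnipotent p x) :
    ∃ k : ℕ, x ^ p ^ k = 1 := by
  rw [IsTopologicallyUnipotent, nhds_discrete, tendsto_pure] at hx
  exact hx.exists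

end Monoid

section Ring

variable {p : ℕ} [Fact p.Prime] {R : Type*} [Ring R] [CharP R p] [TopologicalSpace R]
  [DiscreteTopology R]

theorem isNilpotent_sub_one {x : R} (hx : IsTopologicallyUnipotent p x) :
    IsNilpotent (x - 1) := by
  obtain ⟨k, hk⟩ := hx.exists_pow_eq_one
  exact ⟨p ^ k, by rw [sub_pow_char_pow_of_commute p k (.one_right x), hk, one_pow, sub_self]⟩

theorem isNilpotent_matrix_sub_one {ι : Type*} [Fintype ι] [DecidableEq ι] {X : Matrix ι ι R}
    (hX : IsTopologicallyUnipotent p X) : IsNilpotent (X - 1) := by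
  have : DiscreteTopology (Matrix ι ι R) := inferInstanceAs (DiscreteTopology (ι → ι → R))
  cases isEmpty_or_nonempty ι
  · exact isNilpotent_of_subsingleton
  · exact hX.isNilpotent_sub_one

end Ring

end IsTopologicallyUnipotent

theorem continuous_of_isOpen_ker {R S : Type*} [Ring R] [TopologicalSpace R]
    [IsTopologicalAddGroup R] [Semiring S] [TopologicalSpace S] [DiscreteTopology S] {f : R →+* S}
    (hf : IsOpen (RingHom.ker f : Set R)) : Continuous f := by
  refine continuous_of_continuousAt_zero f ?_
  rw [ContinuousAt, map_zero, nhds_discrete S, tendsto_pure]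
  exact hf.mem_nhds (map_zero f)

theorem continuous_padicInt_toZMod (p : ℕ) [Fact p.Prime] :
    Continuous (PadicInt.toZMod : ℤ_[p] →+* ZMod p) := by
  refine continuous_of_isOpen_ker ?_
  rw [PadicInt.ker_toZMod]
  exact IsLocalRing.isOpen_maximalIdeal ℤ_[p]

/-- Here `A`, `K` and `k` stand for the ring of integers, the field and the residue field of a
nonarchimedean field, and `D` for the integral form of the conjugate `g⁻¹ * γ * g`. -/
theorem reduction_of_integral_conjugate_unipotent_general {p : ℕ} [Fact p.Prime]
    {ι A K k : Type*} [Fintype ι] [DecidableEq ι]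
    [Semiring A] [TopologicalSpace A] [Semiring K] [TopologicalSpace K] [IsTopologicalSemiring K]
    [Ring k] [CharP k p] [TopologicalSpace k] [DiscreteTopology k]
    {incl : A →+* K} (hincl : IsInducing incl) {red : A →+* k} (hred : Continuous red)
    {γ : Matrix ι ι K} (hγ : IsTopologicallyUnipotent p γ) (g : (Matrix ι ι K)ˣ)
    {D : Matrix ι ι A} (hD : D.map incl = (↑g⁻¹ : Matrix ι ι K) * γ * g) :
    IsNilpotent (D.map red - 1) := by
  have hδ : IsTopologicallyUnipotent p (incl.mapMatrix D) := by
    rw [RingHom.mapMatrix_apply, hD]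
    exact hγ.units_conj g
  have hD_unip : IsTopologicallyUnipotent p D := hδ.of_map hincl.matrix_map
  have hred_unip : IsTopologicallyUnipotent p (red.mapMatrix D) :=
    hD_unip.map (continuous_id.matrix_map hred)
  exact hred_unip.isNilpotent_matrix_sub_one

/-- Lemma 3(2): if `γ ∈ GL_n(ℚ_p)` is topologically unipotent and the conjugate
`δ = g⁻¹γg` has all entries (and all entries of `δ⁻¹`) of norm at most `1`, then
the reduction of `δ` mod `p` is unipotent. -/
theorem reduction_of_integral_conjugate_unipotent
    (p : ℕ) [Fact p.Prime] (hp : p ≠ 2) (n : ℕ) (hn : 0 < n)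
    (γ g : GL (Fin n) ℚ_[p])
    (hγ : Tendsto (fun k : ℕ => (γ : Matrix (Fin n) (Fin n) ℚ_[p]) ^ (p ^ k))
      atTop (nhds 1))
    (hδ : ∀ i j, ‖((g⁻¹ * γ * g : GL (Fin n) ℚ_[p]) : Matrix (Fin n) (Fin n) ℚ_[p]) i j‖ ≤ 1)
    (hδinv : ∀ i j,
      ‖(((g⁻¹ * γ * g)⁻¹ : GL (Fin n) ℚ_[p]) : Matrix (Fin n) (Fin n) ℚ_[p]) i j‖ ≤ 1) :
    ∃ D : Matrix (Fin n) (Fin n) ℤ_[p],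
      (∀ i j, (D i j : ℚ_[p]) =
        ((g⁻¹ * γ * g : GL (Fin n) ℚ_[p]) : Matrix (Fin n) (Fin n) ℚ_[p]) i j) ∧
      IsNilpotent (D.map (PadicInt.toZMod) - 1) :=
  ⟨.of fun i j => ⟨_, hδ i j⟩, fun _ _ => rfl,
    reduction_of_integral_conjugate_unipotent_general (incl := PadicInt.Coe.ringHom)
      PadicInt.isOpenEmbedding_coe.isInducing (continuous_padicInt_toZMod p) hγ g rfl⟩
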